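/- arXiv:1209.1329 — 2 statements merged into one kernel-verified Lean document; each statement's English description precedes it below -/
import Mathlib

section
/- For all integers n, m ≥ 0, every real number a with 0 ≤ a ≤ 1, and every integer k with 0 ≤ k ≤ n+m, the linearization coefficient with a₁ = a and a₂ = 1−a is nonnegative: β_k^{(n,m)}(a, 1−a) ≥ 0. -/
open Finset

/-- The Bessel polynomial `q_n(u) = ∑_{k=0}^n (n!(2n−k)! 2^k)/((2n)!(n−k)! k!) u^k`. -/
noncomputable def besselQ (n : ℕ) (u : ℝ) : ℝ :=
  ∑ k ∈ Finset.range (n + 1),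
    ((n.factorial : ℝ) * (2 * n - k).factorial * 2 ^ k) /
      ((2 * n).factorial * (n - k).factorial * k.factorial) * u ^ k

/-- The Bessel polynomial `q_n` as an element of `ℝ[X]`. -/
noncomputable def besselPoly (n : ℕ) : Polynomial ℝ :=
  ∑ k ∈ Finset.range (n + 1), Polynomial.monomial k
    (((n.factorial : ℝ) * (2 * n - k).factorial * 2 ^ k) /
      ((2 * n).factorial * (n - k).factorial * k.factorial))

namespace besselPoly

open Polynomial
open scoped NNReal

theorem eval_eq (n : ℕ) (u : ℝ) : (besselPoly n).eval u = besselQ n u := by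
  simp [besselPoly, besselQ, eval_finsetSum]

theorem coeff_add (i j : ℕ) : (besselPoly (j + i)).coeff j =
    ((j + i).factorial * (j + 2 * i).factorial * 2 ^ j) /
      ((2 * (j + i)).factorial * i.factorial * j.factorial) := by
  rw [besselPoly, finsetSum_coeff, Finset.sum_eq_single j]
  · rw [coeff_monomial, if_pos rfl, show 2 * (j + i) - j = j + 2 * i by omega,
      Nat.add_sub_cancel_left]
  · intro b _ hb
    rw [coeff_monomial, if_neg hb]
  · simp

theorem coeff_eq_zero {n k : ℕ} (h : n < k) : (besselPoly n).coeff k = 0 := by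
  rw [besselPoly, finsetSum_coeff]
  refine Finset.sum_eq_zero fun b hb => ?_
  rw [coeff_monomial, if_neg]
  have := Finset.mem_range.1 hb
  omega

theorem zero_eq : besselPoly 0 = 1 := by
  simp [besselPoly]

theorem X_mul (n : ℕ) : X * besselPoly n =
    (2 * n + 1 : ℝ) • (besselPoly (n + 1) - derivative (besselPoly (n + 1))) := by
  ext k
  rw [coeff_smul, coeff_sub, coeff_derivative]
  rcases k with _ | j
  · have h0 := coeff_add (n + 1) 0
    have h1 := coeff_add n 1
    rw [add_comm 1 n] at h1
    simp only [zero_add] at h0 ⊢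
    rw [h0, h1, mul_coeff_zero, coeff_X_zero]
    rw [show 2 * (n + 1) = 2 * n + 1 + 1 by ring, show 1 + 2 * n = 2 * n + 1 by ring]
    simp only [Nat.factorial_succ, Nat.factorial_zero]
    push_cast
    simp only [smul_eq_mul]
    field_simp
    ring
  · rw [coeff_X_mul]
    rcases lt_trichotomy j n with h | rfl | h
    · obtain ⟨i, rfl⟩ : ∃ i, n = j + (i + 1) := ⟨n - j - 1, by omega⟩
      have h1 := coeff_add (i + 1) (j + 1)
      have h2 := coeff_add i (j + 2)
      rw [show j + 1 + (i + 1) = j + (i + 1) + 1 by ring] at h1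
      rw [show j + 2 + i = j + (i + 1) + 1 by ring] at h2
      rw [show j + 1 + 1 = j + 2 by ring, h1, h2, coeff_add (i + 1) j]
      rw [show 2 * (j + (i + 1) + 1) = 2 * (j + (i + 1)) + 1 + 1 by ring,
        show j + 1 + 2 * (i + 1) = j + 2 * i + 2 + 1 by ring,
        show j + 2 + 2 * i = j + 2 * i + 2 by ring,
        show j + 2 * (i + 1) = j + 2 * i + 2 by ring]
      simp only [Nat.factorial_succ (2 * (j + (i + 1)) + 1),
        Nat.factorial_succ (2 * (j + (i + 1))), Nat.factorial_succ (j + (i + 1)),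
        Nat.factorial_succ (j + 2 * i + 2), Nat.factorial_succ i, Nat.factorial_succ (j + 1),
        Nat.factorial_succ j]
      push_cast
      simp only [smul_eq_mul]
      field_simp
      ring
    · have h1 := coeff_add 0 j
      have h2 := coeff_add 0 (j + 1)
      rw [add_zero] at h1 h2
      rw [h1, h2, coeff_eq_zero (by omega)]
      rw [show 2 * (j + 1) = 2 * j + 1 + 1 by ring]
      simp only [Nat.factorial_succ, mul_zero, add_zero, Nat.factorial_zero]
      push_cast
      simp only [smul_eq_mul]
      field_simp
      ring
    · rw [coeff_eq_zero h, coeff_eq_zero (by omega), coeff_eq_zero (by omega)]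
      simp

theorem coeff_self_pos (n : ℕ) : 0 < (besselPoly n).coeff n := by
  have h := coeff_add 0 n
  rw [add_zero] at h
  rw [h]
  positivity

theorem degree_eq (n : ℕ) : (besselPoly n).degree = n :=
  degree_eq_of_le_of_coeff_ne_zero
    ((degree_le_iff_coeff_zero _ _).2 fun _ h => coeff_eq_zero (by exact_mod_cast h))
    (coeff_self_pos n).ne'

theorem linearIndependent : LinearIndependent ℝ besselPoly :=
  Polynomial.Sequence.linearIndependent (S := ⟨besselPoly, degree_eq⟩)

/-- The nonnegative combinations of the Bessel polynomials. -/
noncomputable def cone : Submodule ℝ≥0 ℝ[X] := Submodule.span ℝ≥0 (Set.range besselPoly)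

/-- The nonnegative combinations of the polynomials obtained from `q_i`, `i ≤ n`, by subtracting
the derivative; these are `1` and positive multiples of `X * q_i` for `i < n`. -/
noncomputable def subDerivCone (n : ℕ) : Submodule ℝ≥0 ℝ[X] :=
  Submodule.span ℝ≥0 ((fun i => besselPoly i - derivative (besselPoly i)) '' Set.Iic n)

theorem _root_.Submodule.smul_mem_of_nonneg_real {E : Type*} [AddCommMonoid E] [Module ℝ E]
    (S : Submodule ℝ≥0 E) {c : ℝ} (hc : 0 ≤ c) {f : E} (hf : f ∈ S) : c • f ∈ S :=
  S.smul_mem (⟨c, hc⟩ : ℝ≥0) hf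

theorem _root_.Polynomial.sub_derivative_injective :
    Function.Injective fun f : ℝ[X] => f - derivative f := by
  intro f g h
  have h' : f - g = derivative (f - g) := by
    rw [derivative_sub]
    linear_combination h
  by_contra hne
  have hlt := degree_derivative_lt (sub_ne_zero.2 hne)
  rw [← h'] at hlt
  exact lt_irrefl _ hlt

theorem sub_derivative_mem {i n : ℕ} (h : i ≤ n) :
    besselPoly i - derivative (besselPoly i) ∈ subDerivCone n :=
  Submodule.subset_span ⟨i, h, rfl⟩

theorem subDerivCone_mono : Monotone subDerivCone := fun _ _ h =>
  Submodule.span_mono (Set.image_mono (Set.Iic_subset_Iic.2 h))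

theorem X_mul_mem {i n : ℕ} (h : i ≤ n) : X * besselPoly i ∈ subDerivCone (n + 1) := by
  rw [X_mul]
  exact Submodule.smul_mem_of_nonneg_real _ (by positivity) (sub_derivative_mem (by omega))

theorem exists_preimage_of_mem {n : ℕ} (hn : ∀ i ≤ n, besselPoly i ∈ subDerivCone i) {f : ℝ[X]}
    (hf : f ∈ subDerivCone n) : ∃ g : ℝ[X], g - derivative g = f ∧ g ∈ subDerivCone n ∧
      X * g ∈ subDerivCone (n + 1) ∧ g ∈ cone := by
  induction hf using Submodule.span_induction with
  | mem f hf =>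
    obtain ⟨i, hi, rfl⟩ := hf
    exact ⟨besselPoly i, rfl, subDerivCone_mono hi (hn i hi), X_mul_mem hi,
      Submodule.subset_span ⟨i, rfl⟩⟩
  | zero => exact ⟨0, by simp⟩
  | add f₁ f₂ _ _ h₁ h₂ =>
    obtain ⟨g₁, e₁, a₁, b₁, c₁⟩ := h₁
    obtain ⟨g₂, e₂, a₂, b₂, c₂⟩ := h₂
    refine ⟨g₁ + g₂, ?_, add_mem a₁ a₂, ?_, add_mem c₁ c₂⟩
    · rw [← e₁, ← e₂, derivative_add]
      ring
    · rw [mul_add]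
      exact add_mem b₁ b₂
  | smul r f _ h =>
    obtain ⟨g, e, a, b, c⟩ := h
    refine ⟨r • g, ?_, Submodule.smul_mem _ r a, ?_, Submodule.smul_mem _ r c⟩
    · rw [← e, derivative_smul, smul_sub]
    · rw [mul_smul_comm]
      exact Submodule.smul_mem _ r b

theorem mem_subDerivCone (n : ℕ) : besselPoly n ∈ subDerivCone n := by
  induction n using Nat.strong_induction_on with
  | _ n ih =>
    rcases n with _ | n
    · simpa [zero_eq] using sub_derivative_mem (le_refl 0)
    · have hn : ∀ i ≤ n, besselPoly i ∈ subDerivCone i := fun i hi => ih i (by omega)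
      obtain ⟨g, hg, hgm, hgX, -⟩ := exists_preimage_of_mem hn (hn n le_rfl)
      obtain ⟨h, hh, hhm, -, -⟩ := exists_preimage_of_mem hn hgm
      have key : (2 * n + 1 : ℝ) • besselPoly (n + 1) = X * g + h := by
        apply Polynomial.sub_derivative_injective
        simp only [derivative_smul, ← smul_sub, ← X_mul, derivative_add, derivative_mul,
          derivative_X]
        linear_combination (-X : ℝ[X]) * hg - hh
      rw [← inv_smul_smul₀ (show (2 * n + 1 : ℝ) ≠ 0 by positivity) (besselPoly (n + 1)), key]
      exact Submodule.smul_mem_of_nonneg_real _ (by positivity)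
        (add_mem hgX (subDerivCone_mono (by omega) hhm))

theorem mem_cone_of_sub_derivative_mem {n : ℕ} {f : ℝ[X]}
    (hf : f - derivative f ∈ subDerivCone n) : f ∈ cone ∧ X * f ∈ subDerivCone (n + 1) := by
  obtain ⟨g, hg, -, hX, hc⟩ := exists_preimage_of_mem (fun i _ => mem_subDerivCone i) hf
  obtain rfl := Polynomial.sub_derivative_injective hg
  exact ⟨hc, hX⟩

theorem comp_mem_of_mem_subDerivCone {n : ℕ} {a : ℝ}
    (h : ∀ i ≤ n, (besselPoly i - derivative (besselPoly i)).comp (C a * X) ∈ subDerivCone i)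
    {f : ℝ[X]} (hf : f ∈ subDerivCone n) : f.comp (C a * X) ∈ subDerivCone n := by
  induction hf using Submodule.span_induction with
  | mem f hf =>
    obtain ⟨i, hi, rfl⟩ := hf
    exact subDerivCone_mono hi (h i hi)
  | zero => simp
  | add f₁ f₂ _ _ h₁ h₂ =>
    rw [add_comp]
    exact add_mem h₁ h₂
  | smul r f _ h =>
    rw [smul_comp]
    exact Submodule.smul_mem _ r h

theorem smul_comp_sub_derivative (a : ℝ) (f : ℝ[X]) :
    a • f.comp (C a * X) - derivative (a • f.comp (C a * X)) =
      (a ^ 2) • (f - derivative f).comp (C a * X) + (a * (1 - a)) • f.comp (C a * X) := by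
  simp only [derivative_comp, derivative_mul, derivative_C, derivative_X,
    sub_comp, smul_eq_C_mul, C_mul, C_sub, C_pow, C_1]
  ring

theorem smul_comp_sub_derivative_mem {a : ℝ} (ha0 : 0 ≤ a) (ha1 : a ≤ 1) {n : ℕ}
    (h : ∀ i ≤ n, (besselPoly i - derivative (besselPoly i)).comp (C a * X) ∈ subDerivCone i) :
    a • (besselPoly n).comp (C a * X) - derivative (a • (besselPoly n).comp (C a * X)) ∈
      subDerivCone n := by
  rw [smul_comp_sub_derivative]
  exact add_mem (Submodule.smul_mem_of_nonneg_real _ (sq_nonneg a) (h n le_rfl))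
    (Submodule.smul_mem_of_nonneg_real _ (mul_nonneg ha0 (sub_nonneg.2 ha1))
      (comp_mem_of_mem_subDerivCone h (mem_subDerivCone n)))

theorem succ_sub_derivative (n : ℕ) :
    besselPoly (n + 1) - derivative (besselPoly (n + 1)) =
      (2 * n + 1 : ℝ)⁻¹ • (X * besselPoly n) := by
  rw [X_mul, inv_smul_smul₀ (by positivity)]

theorem comp_sub_derivative_mem {a : ℝ} (ha0 : 0 ≤ a) (ha1 : a ≤ 1) (n : ℕ) :
    (besselPoly n - derivative (besselPoly n)).comp (C a * X) ∈ subDerivCone n := by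
  induction n using Nat.strong_induction_on with
  | _ n ih =>
    rcases n with _ | n
    · simpa [zero_eq] using sub_derivative_mem (le_refl 0)
    · have hX := (mem_cone_of_sub_derivative_mem
        (smul_comp_sub_derivative_mem ha0 ha1 fun i hi => ih i (Nat.lt_succ_of_le hi))).2
      have key : (besselPoly (n + 1) - derivative (besselPoly (n + 1))).comp (C a * X) =
          (2 * n + 1 : ℝ)⁻¹ • (X * a • (besselPoly n).comp (C a * X)) := by
        rw [succ_sub_derivative, smul_comp, mul_comp, X_comp, smul_eq_C_mul a]
        congr 1
        ring
      rw [key]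
      exact Submodule.smul_mem_of_nonneg_real _ (by positivity) hX

theorem comp_mem_cone {a : ℝ} (ha0 : 0 ≤ a) (ha1 : a ≤ 1) (n : ℕ) :
    (besselPoly n).comp (C a * X) ∈ cone := by
  rcases ha0.eq_or_lt with rfl | ha
  · have h0 : (besselPoly n).comp (C 0 * X) = (besselPoly n).coeff 0 • besselPoly 0 := by
      rw [C_0, zero_mul, comp_zero, zero_eq, smul_eq_C_mul, mul_one, coeff_zero_eq_eval_zero]
    have hpos : 0 ≤ (besselPoly n).coeff 0 := by
      have h := coeff_add n 0
      rw [zero_add] at h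
      rw [h]
      positivity
    rw [h0]
    exact Submodule.smul_mem_of_nonneg_real _ hpos (Submodule.subset_span ⟨0, rfl⟩)
  · rw [← inv_smul_smul₀ ha.ne' ((besselPoly n).comp (C a * X))]
    exact Submodule.smul_mem_of_nonneg_real _ (inv_nonneg.2 ha0) (mem_cone_of_sub_derivative_mem
      (smul_comp_sub_derivative_mem ha0 ha1 fun i _ => comp_sub_derivative_mem ha0 ha1 i)).1

theorem exists_X_mul_mem {f : ℝ[X]} (hf : f ∈ cone) : ∃ n, X * f ∈ subDerivCone n := by
  induction hf using Submodule.span_induction with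
  | mem f hf =>
    obtain ⟨i, rfl⟩ := hf
    exact ⟨i + 1, X_mul_mem le_rfl⟩
  | zero => exact ⟨0, by simp⟩
  | add f₁ f₂ _ _ h₁ h₂ =>
    obtain ⟨n₁, h₁⟩ := h₁
    obtain ⟨n₂, h₂⟩ := h₂
    refine ⟨max n₁ n₂, ?_⟩
    rw [mul_add]
    exact add_mem (subDerivCone_mono (le_max_left _ _) h₁)
      (subDerivCone_mono (le_max_right _ _) h₂)
  | smul r f _ h =>
    obtain ⟨n, h⟩ := h
    refine ⟨n, ?_⟩
    rw [mul_smul_comm]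
    exact Submodule.smul_mem _ r h

theorem product_sub_derivative (a : ℝ) (n m : ℕ) :
    (besselPoly (n + 1)).comp (C a * X) * (besselPoly (m + 1)).comp (C (1 - a) * X) -
        derivative ((besselPoly (n + 1)).comp (C a * X) *
          (besselPoly (m + 1)).comp (C (1 - a) * X)) =
      X * ((a ^ 2 * (2 * n + 1 : ℝ)⁻¹) •
          ((besselPoly n).comp (C a * X) * (besselPoly (m + 1)).comp (C (1 - a) * X)) +
        ((1 - a) ^ 2 * (2 * m + 1 : ℝ)⁻¹) •
          ((besselPoly (n + 1)).comp (C a * X) * (besselPoly m).comp (C (1 - a) * X))) := by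
  have hn := congrArg (fun f => f.comp (C a * X)) (succ_sub_derivative n)
  have hm := congrArg (fun f => f.comp (C (1 - a) * X)) (succ_sub_derivative m)
  simp only [smul_eq_C_mul, sub_comp, mul_comp, C_comp, X_comp] at hn hm
  simp only [derivative_mul, derivative_comp, derivative_sub, derivative_one, derivative_C,
    derivative_X, smul_eq_C_mul, C_mul, C_sub, C_pow, C_1] at hn hm ⊢
  linear_combination C a * (besselPoly (m + 1)).comp ((1 - C a) * X) * hn +
    (1 - C a) * (besselPoly (n + 1)).comp (C a * X) * hm

theorem product_mem_cone {a : ℝ} (ha0 : 0 ≤ a) (ha1 : a ≤ 1) : ∀ n m : ℕ,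
    (besselPoly n).comp (C a * X) * (besselPoly m).comp (C (1 - a) * X) ∈ cone
  | 0, m => by
    rw [zero_eq, one_comp, one_mul]
    exact comp_mem_cone (sub_nonneg.2 ha1) (by linarith) m
  | n + 1, 0 => by
    rw [zero_eq, one_comp, mul_one]
    exact comp_mem_cone ha0 ha1 (n + 1)
  | n + 1, m + 1 => by
    obtain ⟨N, hN⟩ := exists_X_mul_mem (add_mem
      (cone.smul_mem_of_nonneg_real (c := a ^ 2 * (2 * n + 1 : ℝ)⁻¹) (by positivity)
        (product_mem_cone ha0 ha1 n (m + 1)))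
      (cone.smul_mem_of_nonneg_real (c := (1 - a) ^ 2 * (2 * m + 1 : ℝ)⁻¹) (by positivity)
        (product_mem_cone ha0 ha1 (n + 1) m)))
    rw [← product_sub_derivative] at hN
    exact (mem_cone_of_sub_derivative_mem hN).1

theorem coeff_nonneg_of_sum_mem_cone {s : Finset ℕ} {c : ℕ → ℝ}
    (h : ∑ i ∈ s, c i • besselPoly i ∈ cone) {k : ℕ} (hk : k ∈ s) : 0 ≤ c k := by
  obtain ⟨d, hd⟩ := Finsupp.mem_span_range_iff_exists_finsupp.1 h
  have hc : Finsupp.linearCombination ℝ besselPoly (Finsupp.indicator s fun i _ => c i) =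
      Finsupp.linearCombination ℝ besselPoly (d.mapRange ((↑) : ℝ≥0 → ℝ) NNReal.coe_zero) := by
    rw [Finsupp.linearCombination_apply, Finsupp.linearCombination_apply,
      Finsupp.sum_mapRange_index (by simp)]
    refine Eq.trans ?_ hd.symm
    rw [Finsupp.sum_of_support_subset _ (Finsupp.support_indicator_subset _ _) _ (by simp)]
    exact Finset.sum_congr rfl fun i hi => by rw [Finsupp.indicator_of_mem hi]
  have := DFunLike.congr_fun (linearIndependent hc) k
  rw [Finsupp.indicator_of_mem hk, Finsupp.mapRange_apply] at this
  rw [this]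
  exact (d k).coe_nonneg

end besselPoly

/-- Positivity of the linearization coefficients with `a₁ = a`, `a₂ = 1−a` and `0 ≤ a ≤ 1`:
`β_k^{(n,m)}(a, 1−a) ≥ 0` for `0 ≤ k ≤ n+m`. -/
theorem linearization_nonneg (a : ℝ) (ha0 : 0 ≤ a) (ha1 : a ≤ 1) (β : ℕ → ℕ → ℕ → ℝ)
    (hβ : ∀ n m : ℕ, ∀ u : ℝ, besselQ n (a * u) * besselQ m ((1 - a) * u) =
      ∑ k ∈ Finset.range (n + m + 1), β n m k * besselQ k u)
    (n m k : ℕ) (hk : k ≤ n + m) :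
    0 ≤ β n m k := by
  refine besselPoly.coeff_nonneg_of_sum_mem_cone (s := Finset.range (n + m + 1)) ?_
    (Finset.mem_range.2 (Nat.lt_succ_of_le hk))
  convert besselPoly.product_mem_cone ha0 ha1 n m using 1
  refine Polynomial.funext fun u => ?_
  simp [Polynomial.eval_finsetSum, besselPoly.eval_eq, ← hβ n m u]
end

section
/- Let n, m ≥ 0 be integers, let k be an integer with 2k ≥ n+m−1 and k ≤ n+m, and let a be a real number with a ≠ 0 and a ≠ 1. Then a^{2n+2m−2k} · (1−a)^{k−m−n} · ((n+m+1)!/(2k+1−n−m)!) · Σ_{s=0}^{2(n+m−k)} ((k−m+1)_s (2k−2n−2m)_s)/((2k−n−m+2)_s · s!) · a^{−s} = Σ_{i=0}^{m+n−k} a^{i} · C(m+n−k, i) · (−m+k+i+1)_{2(m+n−k−i)} · (1−a)^{−i} · Σ_{ℓ=0}^{i} ((k+2)_ℓ (−k−1)_ℓ (−i)_ℓ)/((−m−i)_ℓ · ℓ!) · (m−i+1+ℓ)_{2i−ℓ} · (1−a)^{ℓ}, where C(p, q) denotes the binomial coefficient. (The left-hand side is a terminating ₂F₁(−m+k+1,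 −2n−2m+2k; −n−m+2k+2; 1/a) and the inner sum on the right is the regularized terminating series (m−i+1)_{2i} · ₃F₂(k+2, −k−1, −i; −m−i, m−i+1; 1−a).) -/
open Finset

/-- The Pochhammer symbol `(z)_k = z(z+1)⋯(z+k−1)` for a real `z`. -/
def poch (z : ℝ) (k : ℕ) : ℝ := ∏ i ∈ Finset.range k, (z + (i : ℝ))

/-- The Bessel-type power series `∑ (x-p+1)_{2p} (cX)^p / p!`. -/
noncomputable def besselSeries (x c : ℝ) : PowerSeries ℝ :=
  PowerSeries.mk fun p => poch (x - p + 1) (2 * p) * c ^ p / (p.factorial : ℝ)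

/-- The formal power series `(1 + X)^x`. -/
noncomputable def binomSeries (x : ℝ) : PowerSeries ℝ := PowerSeries.binomialSeries ℝ x

theorem poch_zero (z : ℝ) : poch z 0 = 1 := by simp [poch]

theorem poch_succ (z : ℝ) (k : ℕ) : poch z (k + 1) = poch z k * (z + k) := by
  simp [poch, Finset.prod_range_succ]

theorem poch_add (z : ℝ) (j k : ℕ) : poch z (j + k) = poch z j * poch (z + j) k := by
  simp only [poch, Finset.prod_range_add]
  congr 1
  refine Finset.prod_congr rfl fun i _ => ?_
  push_cast
  ring

theorem poch_succ_left (z : ℝ) (k : ℕ) : poch z (k + 1) = z * poch (z + 1) k := by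
  rw [add_comm k 1, poch_add]
  simp [poch]

theorem poch_neg (z : ℝ) (k : ℕ) : poch (-z) k = (-1) ^ k * poch (z - k + 1) k := by
  have h : (-1 : ℝ) ^ k = ∏ _i ∈ Finset.range k, (-1 : ℝ) := by simp
  simp only [poch]
  rw [← Finset.prod_range_reflect (fun i : ℕ => z - k + 1 + (i : ℝ)) k, h,
    ← Finset.prod_mul_distrib]
  refine Finset.prod_congr rfl fun i hi => ?_
  have h : i + 1 ≤ k := Finset.mem_range.1 hi
  rw [Nat.sub_sub, add_comm 1 i, Nat.cast_sub h]
  push_cast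
  ring

theorem poch_pos {z : ℝ} (hz : 0 < z) (k : ℕ) : 0 < poch z k :=
  Finset.prod_pos fun _ _ => by positivity

theorem poch_natCast_succ (j k : ℕ) :
    poch ((j : ℝ) + 1) k = ((j + k).factorial : ℝ) / (j.factorial : ℝ) := by
  induction k with
  | zero => rw [poch_zero, add_zero, div_self (by positivity)]
  | succ k ih =>
    rw [poch_succ, ih, ← add_assoc, Nat.factorial_succ]
    push_cast
    ring

theorem choose_eq_poch_div (x : ℝ) (k : ℕ) :
    Ring.choose x k = poch (x - k + 1) k / (k.factorial : ℝ) := by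
  have h : ∀ k : ℕ, (descPochhammer ℤ k).smeval x = poch (x - k + 1) k := by
    intro k
    induction k with
    | zero => simp [poch_zero]
    | succ k ih =>
      rw [descPochhammer_succ_right, Polynomial.smeval_mul, ih, poch_succ_left]
      simp only [Polynomial.smeval_sub, Polynomial.smeval_X, pow_one, Polynomial.smeval_natCast,
        pow_zero, nsmul_eq_mul, mul_one]
      rw [mul_comm]
      push_cast
      congr 1
      · ring
      · congr 1
        ring
  rw [Ring.choose_eq_smul, h, smul_eq_mul, div_eq_inv_mul]

theorem coeff_binomSeries (x : ℝ) (k : ℕ) :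
    PowerSeries.coeff k (binomSeries x) = poch (x - k + 1) k / (k.factorial : ℝ) := by
  rw [binomSeries, PowerSeries.binomialSeries_coeff, choose_eq_poch_div, smul_eq_mul, mul_one]

theorem binomSeries_add_natCast (x : ℝ) (k : ℕ) :
    binomSeries (x + k) = binomSeries x * (1 + PowerSeries.X) ^ k := by
  simp only [binomSeries]
  rw [PowerSeries.binomialSeries_add, PowerSeries.binomialSeries_nat]

theorem binomSeries_add_one (x : ℝ) :
    binomSeries (x + 1) = binomSeries x * (1 + PowerSeries.X) := by
  simpa using binomSeries_add_natCast x 1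

theorem coeff_besselSeries (x c : ℝ) (p : ℕ) :
    PowerSeries.coeff p (besselSeries x c) =
      poch (x - p + 1) (2 * p) * c ^ p / (p.factorial : ℝ) := by
  simp [besselSeries]

theorem centered_poch_succ (x : ℝ) (p : ℕ) :
    poch (x - (p + 1 : ℕ) + 1) (2 * (p + 1)) =
      (x - p) * (x + p + 1) * poch (x - p + 1) (2 * p) := by
  rw [show 2 * (p + 1) = 2 * p + 1 + 1 by ring, poch_succ, poch_succ_left]
  push_cast
  rw [show x - ((p : ℝ) + 1) + 1 + 1 = x - p + 1 by ring]
  ring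

theorem mul_centered_poch_sub_one (x : ℝ) (p : ℕ) :
    (x + p) * poch (x - 1 - p + 1) (2 * p) = (x - p) * poch (x - p + 1) (2 * p) := by
  have h := poch_succ (x - p) (2 * p)
  rw [poch_succ_left] at h
  push_cast at h
  rw [show x - 1 - p + 1 = x - p by ring, h]
  ring

theorem centered_poch_sub (x : ℝ) (p : ℕ) :
    poch (x - (p + 1 : ℕ) + 1) (2 * (p + 1)) - poch (x - 1 - (p + 1 : ℕ) + 1) (2 * (p + 1)) =
      2 * (p + 1) * (x - p) * poch (x - p + 1) (2 * p) := by
  rw [centered_poch_succ, centered_poch_succ]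
  linear_combination (-(x - 1 - p)) * mul_centered_poch_sub_one x p

open PowerSeries in
theorem besselSeries_derivative_down (x c : ℝ) :
    C (2 * c) * X ^ 2 * d⁄dX ℝ (besselSeries x c) =
      (C (2 * x * c) * X - 1) * besselSeries x c + besselSeries (x - 1) c := by
  ext k
  rw [sub_mul, one_mul, mul_assoc (C _) X, mul_assoc (C _) (X ^ 2), map_add, map_sub, coeff_C_mul,
    coeff_C_mul, pow_two, mul_assoc X X]
  cases k with
  | zero => simp [besselSeries, poch_zero]
  | succ p =>
    rw [coeff_succ_X_mul, coeff_succ_X_mul]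
    have hs := centered_poch_sub x p
    have h1 : coeff p (X * d⁄dX ℝ (besselSeries x c)) = p * coeff p (besselSeries x c) := by
      cases p with
      | zero => simp
      | succ q =>
        rw [coeff_succ_X_mul, coeff_derivative]
        push_cast
        ring
    rw [h1]
    simp only [coeff_besselSeries, Nat.factorial_succ, Nat.cast_mul]
    have hp : (p.factorial : ℝ) ≠ 0 := by positivity
    have hp' : ((p + 1 : ℕ) : ℝ) ≠ 0 := by positivity
    rw [sub_eq_iff_eq_add] at hs
    rw [hs]
    push_cast at hp' ⊢
    field_simp
    ring

open PowerSeries in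
theorem besselSeries_derivative_up (x c : ℝ) :
    C (2 * c) * X ^ 2 * d⁄dX ℝ (besselSeries x c) =
      -(C (2 * (x + 1) * c) * X + 1) * besselSeries x c + besselSeries (x + 1) c := by
  have key : besselSeries (x + 1) c - besselSeries x c - C (2 * (x + 1) * c) * X * besselSeries x c
      = C (2 * c) * X ^ 2 * d⁄dX ℝ (besselSeries x c) := by
    ext k
    rw [mul_assoc (C _) X, mul_assoc (C _) (X ^ 2), map_sub, map_sub, coeff_C_mul, coeff_C_mul, pow_two,
      mul_assoc X X]
    cases k with
    | zero => simp [besselSeries, poch_zero]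
    | succ p =>
      rw [coeff_succ_X_mul, coeff_succ_X_mul]
      have hs := centered_poch_sub (x + 1) p
      have ht := mul_centered_poch_sub_one (x + 1) p
      rw [add_sub_cancel_right] at hs ht
      have h1 : coeff p (X * d⁄dX ℝ (besselSeries x c)) = p * coeff p (besselSeries x c) := by
        cases p with
        | zero => simp
        | succ q =>
          rw [coeff_succ_X_mul, coeff_derivative]
          push_cast
          ring
      rw [h1]
      simp only [coeff_besselSeries, Nat.factorial_succ, Nat.cast_mul]
      have hp : (p.factorial : ℝ) ≠ 0 := by positivity
      have hp' : ((p + 1 : ℕ) : ℝ) ≠ 0 := by positivity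
      rw [mul_assoc, ← ht, sub_eq_iff_eq_add] at hs
      rw [hs]
      push_cast at hp' ⊢
      field_simp
      ring
  rw [← key]
  ring

/-- The triple product coefficient, with the third index tied to the first two. -/
noncomputable def tripleCoeff (a : ℝ) (N : ℕ) (n m : ℝ) : ℝ :=
  PowerSeries.coeff N (besselSeries (n + m + 1 - N) (-(a * (1 - a))) * besselSeries m a *
    besselSeries n (1 - a))

/-- The coefficient of `X^(2N)` in `(1+X)^(N-1-n) (1+aX)^(n+m+1)`. -/
noncomputable def binomCoeff (a : ℝ) (N : ℕ) (n m : ℝ) : ℝ :=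
  PowerSeries.coeff (2 * N) (binomSeries (N - 1 - n) *
    PowerSeries.rescale a (binomSeries (n + m + 1)))

open PowerSeries in
theorem binomCoeff_contiguous (a : ℝ) (N : ℕ) (n m : ℝ) :
    binomCoeff a N n m =
      a * binomCoeff a N (n - 1) m + (1 - a) * binomCoeff a N n (m - 1) := by
  simp only [binomCoeff]
  rw [← coeff_C_mul, ← coeff_C_mul, ← map_add]
  congr 1
  rw [show (N : ℝ) - 1 - (n - 1) = (N - 1 - n) + 1 by ring,
    show n - 1 + m + 1 = n + m by ring, show n + (m - 1) + 1 = n + m by ring,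
    binomSeries_add_one, binomSeries_add_one, map_mul, map_add, map_one, rescale_X, map_sub,
    map_one]
  ring

open PowerSeries in
theorem tripleCoeff_contiguous (a : ℝ) (N : ℕ) (n m : ℝ) :
    tripleCoeff a N n m =
      a * tripleCoeff a N (n - 1) m + (1 - a) * tripleCoeff a N n (m - 1) := by
  cases N with
  | zero => simp [tripleCoeff, besselSeries, poch_zero]
  | succ N =>
    simp only [tripleCoeff]
    rw [show n - 1 + m + 1 - ((N + 1 : ℕ) : ℝ) = n + m - 1 - N by push_cast; ring,
      show n + (m - 1) + 1 - ((N + 1 : ℕ) : ℝ) = n + m - 1 - N by push_cast; ring,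
      show n + m + 1 - ((N + 1 : ℕ) : ℝ) = n + m - 1 - N + 1 by push_cast; ring]
    have hy := besselSeries_derivative_down n (1 - a)
    have hu := besselSeries_derivative_down m a
    have hw := besselSeries_derivative_up (n + m - 1 - N) (-(a * (1 - a)))
    set y := besselSeries n (1 - a)
    set u := besselSeries m a
    set w := besselSeries (n + m - 1 - N) (-(a * (1 - a)))
    have key : C (2 * (a * (1 - a))) * X * (X * d⁄dX ℝ (w * u * y)) =
        C (2 * (a * (1 - a)) * N) * X * (w * u * y) +
        C a * (w * u * besselSeries (n - 1) (1 - a)) +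
        C (1 - a) * (w * besselSeries (m - 1) a * y) -
        besselSeries (n + m - 1 - N + 1) (-(a * (1 - a))) * u * y := by
      simp only [Derivation.leibniz, smul_eq_mul]
      simp only [map_mul, map_sub, map_add, map_neg, map_one] at hy hu hw ⊢
      linear_combination (C a * w * u) * hy + (1 - C a) * w * y * hu - u * y * hw
    have hc := congrArg (coeff (N + 1)) key
    have h1 : coeff N (X * d⁄dX ℝ (w * u * y)) = N * coeff N (w * u * y) := by
      cases N with
      | zero => simp
      | succ q =>
        rw [coeff_succ_X_mul, coeff_derivative]
        push_cast
        ring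
    rw [map_sub, map_add, map_add, mul_assoc (C _) X, mul_assoc (C _) X, coeff_C_mul, coeff_C_mul, coeff_C_mul,
      coeff_C_mul, coeff_succ_X_mul, coeff_succ_X_mul, h1] at hc
    linear_combination hc

theorem besselSeries_neg_one (c : ℝ) : besselSeries (-1) c = 1 := by
  ext k
  rw [coeff_besselSeries, PowerSeries.coeff_one]
  cases k with
  | zero => simp [poch_zero]
  | succ p =>
    have h : poch ((-1 : ℝ) - (p + 1 : ℕ) + 1) (2 * (p + 1)) = 0 := by
      induction p with
      | zero => rw [centered_poch_succ]; simp
      | succ p ih => rw [centered_poch_succ, ih, mul_zero]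
    rw [h]
    simp

open PowerSeries in
theorem tripleCoeff_neg_one {a : ℝ} (ha : a ≠ 0) (N : ℕ) (m : ℝ) :
    (N.factorial : ℝ) * tripleCoeff a N (-1) m =
      ((2 * N).factorial : ℝ) * binomCoeff a N (-1) m := by
  have hterm : ∀ q ∈ Finset.range (N + 1),
      (N.factorial : ℝ) * (coeff q (besselSeries m a) *
        coeff (N - q) (besselSeries (m - N) (-(a * (1 - a))))) =
      ((2 * N).factorial : ℝ) * coeff (2 * N) (binomSeries m *
        ((C a * (1 + X)) ^ q * C (-(a * (1 - a))) ^ (N - q) * (N.choose q : ℝ⟦X⟧))) := by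
    intro q hq
    obtain ⟨l, rfl⟩ := Nat.exists_eq_add_of_le (Nat.lt_succ_iff.1 (Finset.mem_range.1 hq))
    rw [Nat.add_sub_cancel_left]
    have e : binomSeries m * ((C a * (1 + X)) ^ q * C (-(a * (1 - a))) ^ l *
        (((q + l).choose q : ℕ) : ℝ⟦X⟧)) =
        C (a ^ q * (-(a * (1 - a))) ^ l * ((q + l).choose q : ℝ)) * binomSeries (m + q) := by
      rw [binomSeries_add_natCast]
      simp only [map_mul, map_pow, map_natCast, mul_pow]
      ring
    rw [e, coeff_C_mul, coeff_binomSeries, coeff_besselSeries, coeff_besselSeries,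
      Nat.cast_add_choose]
    have hp : poch (m + q - (2 * (q + l) : ℕ) + 1) (2 * (q + l)) =
        poch (m - (q + l : ℕ) - l + 1) (2 * l) * poch (m - q + 1) (2 * q) := by
      rw [show 2 * (q + l) = 2 * l + 2 * q by ring, poch_add]
      push_cast
      congr 2 <;> ring
    rw [hp]
    have h1 : (q.factorial : ℝ) ≠ 0 := by positivity
    have h2 : (l.factorial : ℝ) ≠ 0 := by positivity
    have h3 : ((2 * (q + l)).factorial : ℝ) ≠ 0 := by positivity
    field_simp
  have hR : binomCoeff a N (-1) m =
      coeff (2 * N) (binomSeries m * (C a * (1 + X) + C (-(a * (1 - a)))) ^ N) := by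
    have h0 : binomSeries (N : ℝ) = (1 + X) ^ N := by
      rw [binomSeries, binomialSeries_nat]
    have ha' : a ^ (2 * N) ≠ 0 := pow_ne_zero _ ha
    apply mul_left_cancel₀ ha'
    rw [← coeff_rescale, binomCoeff, ← coeff_C_mul, show (N : ℝ) - 1 - -1 = N by ring,
      show -1 + m + 1 = m by ring, h0]
    congr 1
    have e : rescale a (C a * (1 + X) + C (-(a * (1 - a)))) = C (a ^ 2) * (1 + X) := by
      rw [show C a * (1 + X) + C (-(a * (1 - a))) = C a * (C a + X) by
        simp only [map_neg, map_mul, map_sub, map_one]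
        ring]
      have hC : rescale a (C a) = C a := by
        ext k
        cases k <;> simp [coeff_rescale, coeff_C]
      simp only [map_mul, map_add, rescale_X, hC, map_pow]
      ring
    rw [map_mul, map_pow (rescale a), e, mul_pow, ← map_pow, ← pow_mul]
    ring
  rw [tripleCoeff, besselSeries_neg_one, mul_one, show -1 + m + 1 - (N : ℝ) = m - N by ring,
    mul_comm (besselSeries _ _), coeff_mul, Finset.Nat.sum_antidiagonal_eq_sum_range_succ
      (fun i j => coeff i (besselSeries m a) * coeff j (besselSeries (m - N) (-(a * (1 - a))))),
    Finset.mul_sum, Finset.sum_congr rfl hterm, ← Finset.mul_sum, hR, add_pow, ← map_sum,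
    ← Finset.mul_sum]

/-- A real function that agrees with a polynomial everywhere. -/
def IsPolyFun (f : ℝ → ℝ) : Prop := ∃ P : Polynomial ℝ, ∀ x, f x = P.eval x

namespace IsPolyFun

theorem const (c : ℝ) : IsPolyFun fun _ => c := ⟨Polynomial.C c, fun x => by simp⟩

theorem id : IsPolyFun fun x => x := ⟨Polynomial.X, fun x => by simp⟩

theorem add {f g : ℝ → ℝ} (hf : IsPolyFun f) (hg : IsPolyFun g) :
    IsPolyFun fun x => f x + g x := by
  obtain ⟨P, hP⟩ := hf
  obtain ⟨Q, hQ⟩ := hg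
  exact ⟨P + Q, fun x => by simp [hP, hQ]⟩

theorem mul {f g : ℝ → ℝ} (hf : IsPolyFun f) (hg : IsPolyFun g) :
    IsPolyFun fun x => f x * g x := by
  obtain ⟨P, hP⟩ := hf
  obtain ⟨Q, hQ⟩ := hg
  exact ⟨P * Q, fun x => by simp [hP, hQ]⟩

theorem sub {f g : ℝ → ℝ} (hf : IsPolyFun f) (hg : IsPolyFun g) :
    IsPolyFun fun x => f x - g x := by
  obtain ⟨P, hP⟩ := hf
  obtain ⟨Q, hQ⟩ := hg
  exact ⟨P - Q, fun x => by simp [hP, hQ]⟩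

theorem div_const {f : ℝ → ℝ} (hf : IsPolyFun f) (c : ℝ) : IsPolyFun fun x => f x / c := by
  simpa only [div_eq_mul_inv] using hf.mul (const c⁻¹)

theorem sum {ι : Type*} (s : Finset ι) {f : ι → ℝ → ℝ} (hf : ∀ i, IsPolyFun (f i)) :
    IsPolyFun fun x => ∑ i ∈ s, f i x := by
  choose P hP using hf
  exact ⟨∑ i ∈ s, P i, fun x => by simp [hP, Polynomial.eval_finsetSum]⟩

theorem poch {f : ℝ → ℝ} (hf : IsPolyFun f) (k : ℕ) : IsPolyFun fun x => poch (f x) k := by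
  induction k with
  | zero => simpa only [poch_zero] using const 1
  | succ k ih => simpa only [poch_succ] using ih.mul (hf.add (const k))

/-- A polynomial function that is multiplied by `b ≠ 1` under a unit shift vanishes. -/
theorem eq_zero_of_shift {f : ℝ → ℝ} (hf : IsPolyFun f) {b : ℝ} (hb : b ≠ 1)
    (h : ∀ x, f x = b * f (x - 1)) (x : ℝ) : f x = 0 := by
  obtain ⟨P, hP⟩ := hf
  have hPb : P = Polynomial.C b * Polynomial.taylor (-1) P := by
    refine Polynomial.funext fun y => ?_
    rw [Polynomial.eval_mul, Polynomial.eval_C, Polynomial.taylor_eval, ← hP, ← hP,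
      ← sub_eq_add_neg, h]
  have hl := congrArg Polynomial.leadingCoeff hPb
  rw [Polynomial.leadingCoeff_mul, Polynomial.leadingCoeff_C, Polynomial.leadingCoeff_taylor] at hl
  have hz : (1 - b) * P.leadingCoeff = 0 := by linear_combination hl
  rcases mul_eq_zero.1 hz with h1 | h1
  · exact absurd (sub_eq_zero.1 h1).symm hb
  · rw [hP, Polynomial.leadingCoeff_eq_zero.1 h1, Polynomial.eval_zero]

end IsPolyFun

theorem isPolyFun_tripleCoeff (a : ℝ) (N : ℕ) (n : ℝ) : IsPolyFun (tripleCoeff a N n) := by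
  have hB : ∀ (c : ℝ) (p : ℕ) (f : ℝ → ℝ), IsPolyFun f →
      IsPolyFun fun m => PowerSeries.coeff p (besselSeries (f m) c) := by
    intro c p f hf
    simp only [coeff_besselSeries]
    exact ((((hf.sub (.const _)).add (.const _)).poch _).mul (.const _)).div_const _
  unfold tripleCoeff
  simp only [PowerSeries.coeff_mul]
  refine IsPolyFun.sum _ fun i => IsPolyFun.mul (IsPolyFun.sum _ fun j => ?_) (.const _)
  exact (hB _ _ _ ((((IsPolyFun.const n).add .id).add (.const _)).sub (.const _))).mul
    (hB _ _ _ .id)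

theorem isPolyFun_binomCoeff (a : ℝ) (N : ℕ) (n : ℝ) : IsPolyFun (binomCoeff a N n) := by
  unfold binomCoeff
  simp only [PowerSeries.coeff_mul, PowerSeries.coeff_rescale, coeff_binomSeries]
  refine IsPolyFun.sum _ fun i => IsPolyFun.mul (.const _) (IsPolyFun.mul (.const _) ?_)
  exact ((((((IsPolyFun.const n).add .id).add (.const _)).sub (.const _)).add
    (.const _)).poch _).div_const _

theorem tripleCoeff_eq_binomCoeff {a : ℝ} (ha : a ≠ 0) (N n : ℕ) (m : ℝ) :
    (N.factorial : ℝ) * tripleCoeff a N n m = ((2 * N).factorial : ℝ) * binomCoeff a N n m := by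
  have main : ∀ (i : ℕ) (m : ℝ), (N.factorial : ℝ) * tripleCoeff a N (i - 1) m =
      ((2 * N).factorial : ℝ) * binomCoeff a N (i - 1) m := by
    intro i
    induction i with
    | zero => simpa using tripleCoeff_neg_one ha N
    | succ i ih =>
      rw [Nat.cast_succ, add_sub_cancel_right]
      intro m
      refine sub_eq_zero.1 (IsPolyFun.eq_zero_of_shift (b := 1 - a)
        (((IsPolyFun.const _).mul (isPolyFun_tripleCoeff a N i)).sub
          ((IsPolyFun.const _).mul (isPolyFun_binomCoeff a N i))) (by simpa using ha) ?_ m)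
      intro x
      rw [tripleCoeff_contiguous, binomCoeff_contiguous]
      linear_combination a * ih x
  have h := main (n + 1) m
  rwa [Nat.cast_succ, add_sub_cancel_right] at h

theorem sum_eq_tripleCoeff {a : ℝ} (ha1 : a ≠ 1) {n m k N : ℕ} (h : n + m = k + N) :
    ∑ i ∈ Finset.range (N + 1),
      a ^ i * (N.choose i : ℝ) *
        poch (-(m : ℝ) + (k : ℝ) + (i : ℝ) + 1) (2 * (N - i)) *
        (1 - a) ^ (-(i : ℤ)) *
      ∑ l ∈ Finset.range (i + 1),
        poch ((k : ℝ) + 2) l * poch (-(k : ℝ) - 1) l * poch (-(i : ℝ)) l /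
            (poch (-(m : ℝ) - (i : ℝ)) l * (l.factorial : ℝ)) *
          poch ((m : ℝ) - (i : ℝ) + 1 + (l : ℝ)) (2 * i - l) * (1 - a) ^ l =
      (1 - a) ^ (-(N : ℤ)) * ((N.factorial : ℝ) * tripleCoeff a N n m) := by
  have hc : (n : ℝ) + m = k + N := by exact_mod_cast h
  have hb : 1 - a ≠ 0 := sub_ne_zero.2 ha1.symm
  rw [tripleCoeff, PowerSeries.coeff_mul, Finset.Nat.sum_antidiagonal_eq_sum_range_succ
    (fun i j => PowerSeries.coeff i (besselSeries (n + m + 1 - N) (-(a * (1 - a))) *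
      besselSeries m a) * PowerSeries.coeff j (besselSeries n (1 - a))), Finset.mul_sum,
    Finset.mul_sum]
  refine Finset.sum_congr rfl fun i hi => ?_
  rw [PowerSeries.coeff_mul, Finset.Nat.sum_antidiagonal_eq_sum_range_succ
    (fun l q => PowerSeries.coeff l (besselSeries (n + m + 1 - N) (-(a * (1 - a)))) *
      PowerSeries.coeff q (besselSeries m a)), Finset.sum_mul, Finset.mul_sum, Finset.mul_sum,
    Finset.mul_sum]
  refine Finset.sum_congr rfl fun l hl => ?_
  obtain ⟨p, rfl⟩ := Nat.exists_eq_add_of_le (Nat.lt_succ_iff.1 (Finset.mem_range.1 hi))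
  obtain ⟨q, rfl⟩ := Nat.exists_eq_add_of_le (Nat.lt_succ_iff.1 (Finset.mem_range.1 hl))
  rw [Nat.add_sub_cancel_left, Nat.add_sub_cancel_left,
    show 2 * (l + q) - l = 2 * q + l by lia, poch_add, Nat.cast_add_choose]
  simp only [coeff_besselSeries]
  have e1 : poch (-(m : ℝ) - ((l + q : ℕ) : ℝ)) l = (-1) ^ l * poch ((m : ℝ) + q + 1) l := by
    rw [show -(m : ℝ) - ((l + q : ℕ) : ℝ) = -(m + (l + q : ℕ)) by ring, poch_neg]
    push_cast
    congr 2
    ring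
  have e2 : poch (-((l + q : ℕ) : ℝ)) l =
      (-1) ^ l * (((l + q).factorial : ℝ) / (q.factorial : ℝ)) := by
    rw [poch_neg, show ((l + q : ℕ) : ℝ) - l + 1 = q + 1 by push_cast; ring, poch_natCast_succ,
      add_comm q l]
  have e3 : poch ((n : ℝ) + m + 1 - ((l + q + p : ℕ) : ℝ) - l + 1) (2 * l) =
      (-1) ^ l * (poch ((k : ℝ) + 2) l * poch (-(k : ℝ) - 1) l) := by
    rw [show -(k : ℝ) - 1 = -(k + 1) by ring, poch_neg, two_mul, poch_add, hc]
    rw [show (k : ℝ) + (l + q + p : ℕ) + 1 - (l + q + p : ℕ) - l + 1 = k + 1 - l + 1 by ring,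
      show (k : ℝ) + 1 - l + 1 + l = k + 2 by ring]
    have : ((-1 : ℝ) ^ l) * (-1) ^ l = 1 := by rw [← mul_pow]; simp
    linear_combination (-(poch ((k : ℝ) + 1 - l + 1) l * poch ((k : ℝ) + 2) l)) * this
  have e4 : -(m : ℝ) + k + ((l + q : ℕ) : ℝ) + 1 = n - p + 1 := by
    push_cast at hc ⊢
    linear_combination -hc
  have e5 : (m : ℝ) - ((l + q : ℕ) : ℝ) + 1 + l = m - q + 1 := by push_cast; ring
  have e6 : (m : ℝ) - q + 1 + ((2 * q : ℕ) : ℝ) = m + q + 1 := by push_cast; ring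
  rw [e1, e2, e3, e4, e5, e6]
  have h1 : poch ((m : ℝ) + q + 1) l ≠ 0 := (poch_pos (by positivity) l).ne'
  have h2 : (l.factorial : ℝ) ≠ 0 := by positivity
  have h3 : (q.factorial : ℝ) ≠ 0 := by positivity
  have h4 : (p.factorial : ℝ) ≠ 0 := by positivity
  have h5 : ((l + q).factorial : ℝ) ≠ 0 := by positivity
  have h7 : ((-1 : ℝ) ^ l) ^ 2 = 1 := by rw [← pow_mul, mul_comm, pow_mul]; simp
  rw [zpow_neg, zpow_neg, zpow_natCast, zpow_natCast, neg_pow (a * (1 - a)) l,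
    mul_pow a (1 - a) l]
  field_simp
  rw [h7]
  ring

theorem sum_eq_binomCoeff {a : ℝ} (ha0 : a ≠ 0) {n m k N j : ℕ} (h : n + m = k + N)
    (hj : k + 1 = j + N) :
    a ^ (2 * N) * (((n + m + 1).factorial : ℝ) / (j.factorial : ℝ)) *
      (∑ s ∈ Finset.range (2 * N + 1),
        poch ((k : ℝ) - (m : ℝ) + 1) s * poch (2 * (k : ℝ) - 2 * (n : ℝ) - 2 * (m : ℝ)) s /
            (poch (2 * (k : ℝ) - (n : ℝ) - (m : ℝ) + 2) s * (s.factorial : ℝ)) *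
          a ^ (-(s : ℤ))) =
      ((2 * N).factorial : ℝ) * binomCoeff a N n m := by
  have hc : (n : ℝ) + m = k + N := by exact_mod_cast h
  have hjc : (k : ℝ) + 1 = j + N := by exact_mod_cast hj
  rw [show n + m + 1 = j + 2 * N by lia, ← poch_natCast_succ, binomCoeff, PowerSeries.coeff_mul,
    Finset.Nat.sum_antidiagonal_eq_sum_range_succ
    (fun s t => PowerSeries.coeff s (binomSeries (N - 1 - n)) *
      PowerSeries.coeff t (PowerSeries.rescale a (binomSeries (n + m + 1)))), Finset.mul_sum,
    Finset.mul_sum]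
  refine Finset.sum_congr rfl fun s hs => ?_
  obtain ⟨t, ht⟩ := Nat.exists_eq_add_of_le (Nat.lt_succ_iff.1 (Finset.mem_range.1 hs))
  have htc : 2 * (N : ℝ) = s + t := by exact_mod_cast ht
  rw [ht, Nat.add_sub_cancel_left, PowerSeries.coeff_rescale, coeff_binomSeries,
    coeff_binomSeries, poch_add]
  have e1 : poch ((k : ℝ) - m + 1) s = (-1) ^ s * poch ((N : ℝ) - 1 - n - s + 1) s := by
    rw [← poch_neg]
    congr 1
    linear_combination -hc
  have e2 : poch (2 * (k : ℝ) - 2 * n - 2 * m) s =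
      (-1) ^ s * (((s + t).factorial : ℝ) / (t.factorial : ℝ)) := by
    rw [show 2 * (k : ℝ) - 2 * n - 2 * m = -((s : ℝ) + t) by linear_combination -2 * hc - htc,
      poch_neg, show (s : ℝ) + t - s + 1 = t + 1 by ring, poch_natCast_succ, add_comm t s]
  have e3 : 2 * (k : ℝ) - n - m + 2 = j + 1 := by linear_combination -hc + hjc
  have e4 : (n : ℝ) + m + 1 - t + 1 = j + 1 + s := by linear_combination hc + hjc + htc
  rw [e1, e2, e3, e4]
  have h1 : poch ((j : ℝ) + 1) s ≠ 0 := (poch_pos (by positivity) s).ne'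
  have h2 : (s.factorial : ℝ) ≠ 0 := by positivity
  have h3 : (t.factorial : ℝ) ≠ 0 := by positivity
  have h7 : ((-1 : ℝ) ^ s) ^ 2 = 1 := by rw [← pow_mul, mul_comm, pow_mul]; simp
  rw [zpow_neg, zpow_natCast, pow_add]
  field_simp
  rw [h7, mul_one]

/-- Reduction of a sum of terminating `₃F₂`'s to a terminating `₂F₁`, in the range
`2k ≥ n+m−1`, `k ≤ n+m`: the left-hand side is
`a^{2n+2m−2k} (1−a)^{k−m−n} ((n+m+1)!/(2k+1−n−m)!) ₂F₁(−m+k+1, −2n−2m+2k; −n−m+2k+2; 1/a)`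
and the inner sums on the right are the regularized terminating series
`(m−i+1)_{2i} ⬝ ₃F₂(k+2, −k−1, −i; −m−i, m−i+1; 1−a)`. -/
theorem sum_3F2_reduction_high (n m k : ℕ) (hk1 : n + m ≤ 2 * k + 1) (hk2 : k ≤ n + m)
    (a : ℝ) (ha0 : a ≠ 0) (ha1 : a ≠ 1) :
    a ^ (2 * n + 2 * m - 2 * k) * (1 - a) ^ ((k : ℤ) - (m : ℤ) - (n : ℤ)) *
        (((n + m + 1).factorial : ℝ) / ((2 * k + 1 - n - m).factorial : ℝ)) *
      (∑ s ∈ Finset.range (2 * (n + m - k) + 1),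
        poch ((k : ℝ) - (m : ℝ) + 1) s * poch (2 * (k : ℝ) - 2 * (n : ℝ) - 2 * (m : ℝ)) s /
            (poch (2 * (k : ℝ) - (n : ℝ) - (m : ℝ) + 2) s * (s.factorial : ℝ)) *
          a ^ (-(s : ℤ))) =
    ∑ i ∈ Finset.range (m + n - k + 1),
      a ^ i * ((m + n - k).choose i : ℝ) *
        poch (-(m : ℝ) + (k : ℝ) + (i : ℝ) + 1) (2 * (m + n - k - i)) *
        (1 - a) ^ (-(i : ℤ)) *
      ∑ l ∈ Finset.range (i + 1),
        poch ((k : ℝ) + 2) l * poch (-(k : ℝ) - 1) l * poch (-(i : ℝ)) l /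
            (poch (-(m : ℝ) - (i : ℝ)) l * (l.factorial : ℝ)) *
          poch ((m : ℝ) - (i : ℝ) + 1 + (l : ℝ)) (2 * i - l) * (1 - a) ^ l := by
  obtain ⟨N, hN⟩ := Nat.exists_eq_add_of_le hk2
  obtain ⟨j, hj⟩ : ∃ j, k + 1 = j + N := ⟨k + 1 - N, by lia⟩
  rw [show 2 * n + 2 * m - 2 * k = 2 * N by lia, show n + m - k = N by lia,
    show m + n - k = N by lia, show 2 * k + 1 - n - m = j by lia,
    show (k : ℤ) - (m : ℤ) - (n : ℤ) = -(N : ℤ) by lia, sum_eq_tripleCoeff ha1 hN,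
    tripleCoeff_eq_binomCoeff ha0, ← sum_eq_binomCoeff ha0 hN hj]
  ring
end
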